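/- arXiv:0801.0570 — 2 statements merged into one kernel-verified Lean document; each statement's English description precedes it below -/
import Mathlib

section
/- Let A be a real n×n matrix, B a real n×m matrix, k ≥ 1, and Γ = [B AB … A^{k−1}B] the n×km matrix with blocks A^i B. Assume P is a km×n real matrix with Γ P = I_n, let ‖P‖ denote its operator norm with respect to infinity norms, and let 0 ≤ l < 1 and 0 ≤ ε be such that ε·‖P‖ ≤ 1 − l. Then for every x_0 ∈ ℝ^n, every ũ_1 ∈ ℝ^{km} with ‖ũ_1‖_∞ ≤ l, and every x_2 ∈ ℝ^n with ‖x_2 − (A^k x_0 + Γ ũ_1)‖_∞ ≤ ε, there exists ũ_2 ∈ ℝ^{km} with ‖ũ_2‖_∞ ≤ 1 and x_2 = A^k x_0 + Γ ũ_2. -/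
/-- paper's Proposition 3: with `Γ = [B AB … A^(k-1)B]` (indexed
by block pairs `(i, j) ∈ Fin k × Fin m`, entry `(A^i B) r j`), `P` a right
inverse of `Γ` with `∞`-operator norm `‖P‖`, `0 ≤ l < 1`, `0 ≤ ε` and
`ε ‖P‖ ≤ 1 - l`: any `x₂` within `ε` (in `‖·‖_∞`) of a point
`A^k x₀ + Γ ũ₁` reachable with `‖ũ₁‖_∞ ≤ l` is itself of the form
`A^k x₀ + Γ ũ₂` with `‖ũ₂‖_∞ ≤ 1`. -/
theorem stmt_6 (n m k : ℕ) (hk : 1 ≤ k)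
    (A : Matrix (Fin n) (Fin n) ℝ) (B : Matrix (Fin n) (Fin m) ℝ)
    (Γ : Matrix (Fin n) (Fin k × Fin m) ℝ)
    (hΓ : ∀ (r : Fin n) (q : Fin k × Fin m), Γ r q = (A ^ (q.1 : ℕ) * B) r q.2)
    (P : Matrix (Fin k × Fin m) (Fin n) ℝ) (hP : Γ * P = 1)
    (l ε : ℝ) (hl0 : 0 ≤ l) (hl1 : l < 1) (hε : 0 ≤ ε)
    (hεP : ε * ‖LinearMap.toContinuousLinearMap P.mulVecLin‖ ≤ 1 - l)
    (x₀ : Fin n → ℝ) (u₁ : Fin k × Fin m → ℝ) (hu₁ : ‖u₁‖ ≤ l)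
    (x₂ : Fin n → ℝ) (hx₂ : ‖x₂ - ((A ^ k).mulVec x₀ + Γ.mulVec u₁)‖ ≤ ε) :
    ∃ u₂ : Fin k × Fin m → ℝ, ‖u₂‖ ≤ 1 ∧ x₂ = (A ^ k).mulVec x₀ + Γ.mulVec u₂ := by
  set d := x₂ - ((A ^ k).mulVec x₀ + Γ.mulVec u₁) with hd
  have h1 : ‖P.mulVec d‖ ≤ ‖LinearMap.toContinuousLinearMap P.mulVecLin‖ * ‖d‖ :=
    (LinearMap.toContinuousLinearMap P.mulVecLin).le_opNorm d
  have h2 : ‖LinearMap.toContinuousLinearMap P.mulVecLin‖ * ‖d‖ ≤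
      ‖LinearMap.toContinuousLinearMap P.mulVecLin‖ * ε :=
    mul_le_mul_of_nonneg_left hx₂ (norm_nonneg _)
  refine ⟨u₁ + P.mulVec d, ?_, ?_⟩
  · have h3 := norm_add_le u₁ (P.mulVec d)
    linarith
  · rw [Matrix.mulVec_add, Matrix.mulVec_mulVec, hP, Matrix.one_mulVec, hd]
    abel
end

section
/- Let A be a real n×n matrix, B a real n×m matrix, k ≥ 1, Γ = [B AB … A^{k−1}B], and let P be a km×n real matrix with Γ P = I_n and P ≠ 0, with ‖P‖ its ∞-operator norm. Then for every x_0 ∈ ℝ^n and every l > 0, the set of states reachable in k steps from x_0 with inputs of norm at most l, namely {A^k x_0 + Γ ũ : ‖ũ‖_∞ ≤ l}, contains the closed infinity-norm ball of radius l/‖P‖ centered at A^k x_0. -/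
/-- with `Γ = [B AB … A^(k-1)B]`, `P ≠ 0` a right inverse of `Γ`
with `∞`-operator norm `‖P‖`, the `k`-step reachable set
`{A^k x₀ + Γ ũ : ‖ũ‖_∞ ≤ l}` contains the closed `∞`-ball of radius `l / ‖P‖`
centered at `A^k x₀`. -/
theorem stmt_7 (n m k : ℕ) (hk : 1 ≤ k)
    (A : Matrix (Fin n) (Fin n) ℝ) (B : Matrix (Fin n) (Fin m) ℝ)
    (Γ : Matrix (Fin n) (Fin k × Fin m) ℝ)
    (hΓ : ∀ (r : Fin n) (q : Fin k × Fin m), Γ r q = (A ^ (q.1 : ℕ) * B) r q.2)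
    (P : Matrix (Fin k × Fin m) (Fin n) ℝ) (hP : Γ * P = 1) (hP0 : P ≠ 0)
    (x₀ : Fin n → ℝ) (l : ℝ) (hl : 0 < l) :
    Metric.closedBall ((A ^ k).mulVec x₀)
        (l / ‖LinearMap.toContinuousLinearMap P.mulVecLin‖)
      ⊆ {x : Fin n → ℝ | ∃ u : Fin k × Fin m → ℝ, ‖u‖ ≤ l ∧
          x = (A ^ k).mulVec x₀ + Γ.mulVec u} := by
  intro x hx
  rw [Metric.mem_closedBall, dist_eq_norm] at hx
  refine ⟨P.mulVec (x - (A ^ k).mulVec x₀), ?_, ?_⟩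
  · have h := (LinearMap.toContinuousLinearMap P.mulVecLin).le_opNorm (x - (A ^ k).mulVec x₀)
    have h2 : ‖P.mulVec (x - (A ^ k).mulVec x₀)‖ ≤
        ‖LinearMap.toContinuousLinearMap P.mulVecLin‖ * ‖x - (A ^ k).mulVec x₀‖ := h
    refine h2.trans ((mul_le_mul_of_nonneg_left hx (norm_nonneg _)).trans ?_)
    by_cases h0 : ‖LinearMap.toContinuousLinearMap P.mulVecLin‖ = 0
    · rw [h0, zero_mul]
      exact hl.le
    · rw [mul_div_cancel₀ _ h0]
  · rw [Matrix.mulVec_mulVec, hP, Matrix.one_mulVec]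
    abel
end
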